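/- Suppose A is in unipotent upper triangular form. Then for every integer d ≥ 0, the dimension over 𝔽₂ of the image in the quotient ring R/I of the 𝔽₂-subspace of R consisting of homogeneous polynomials of degree d equals the coefficient of t^d in the polynomial ∏_{i=1}^{k} (1 + t + t² + ⋯ + t^{n_i}). -/

import Mathlib

open MvPolynomial

/-- The ideal `I` of `R = 𝔽₂[x_{i,m} : 1 ≤ i ≤ k, 0 ≤ m ≤ n_i]` generated by the monomials
`x_{i,0} x_{i,1} ⋯ x_{i,n_i}` for each `i`, together with the linear forms
`x_{i,m} + Σ_{j=1}^{i} a_{j,m}^i x_{j,0}` for each `i` and `1 ≤ m ≤ n_i`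
(within block `i` the variables `x_{i,1}, …, x_{i,n_i}` are 0-indexed by `m : Fin (n i)`,
`x_{i,m}` being the variable `X ⟨i, m.succ⟩`). -/
noncomputable def bottIdeal (k : ℕ) (n : Fin k → ℕ) (a : Fin k → (i : Fin k) → Fin (n i) → ZMod 2) :
    Ideal (MvPolynomial (Σ i : Fin k, Fin (n i + 1)) (ZMod 2)) :=
  Ideal.span
    ({p | ∃ i : Fin k, p = ∏ m : Fin (n i + 1), X ⟨i, m⟩} ∪
     {p | ∃ i : Fin k, ∃ m : Fin (n i),
        p = X ⟨i, m.succ⟩ +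
          ∑ j ∈ Finset.univ.filter (fun j : Fin k => j ≤ i), C (a j i m) * X ⟨j, 0⟩})

/-!
Modulo the linear generators, `x_{i,m}` with `m ≥ 1` is a linear form in the `x_{j,0}`, `j ≤ i`, up
to sign. Replacing it by this form in the monomial generators gives one homogeneous generator `f_s`
for each variable `x_s`, and for a suitable lexicographic order `f_s` has the pure power
`x_s ^ d_s` as leading monomial, where `d_s = n_i + 1` if `s = (i, 0)` and `d_s = 1` otherwise.

Write each exponent as `a_s = q_s d_s + r_s` with `r_s < d_s`. The products
`∏_s x_s ^ r_s f_s ^ q_s` have every monomial `∏_s x_s ^ a_s` as leading monomial exactly once, so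
they form a basis of the polynomial ring. Multiplication by `f_s` only raises `q_s` by one, so the
ideal is spanned by the products with `q ≠ 0`. The remaining products are the monomials with
`a_s < d_s` for all `s`; they give a basis of the quotient, which is compatible with degrees.
-/

open scoped MonomialOrder

section LeadingTerms

variable {σ K : Type*} [CommRing K] {m : MonomialOrder σ}

/-- The leading monomial of `p` is `X ^ a`, and its coefficient is invertible. -/
structure HasUnitLeadingTerm (m : MonomialOrder σ) (p : MvPolynomial σ K) (a : σ →₀ ℕ) : Prop where
  degree_eq : m.degree p = a
  isUnit_leadingCoeff : IsUnit (m.leadingCoeff p)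

namespace HasUnitLeadingTerm

variable {p q : MvPolynomial σ K} {a b : σ →₀ ℕ}

theorem C_mul_X [Nontrivial K] {c : K} (hc : IsUnit c) (s : σ) :
    HasUnitLeadingTerm m (C c * X s) (Finsupp.single s 1) := by
  classical
  rw [C_mul_X_eq_monomial]
  exact ⟨by rw [m.degree_monomial, if_neg hc.ne_zero], by rwa [m.leadingCoeff_monomial]⟩

theorem X [Nontrivial K] (s : σ) :
    HasUnitLeadingTerm m (MvPolynomial.X s : MvPolynomial σ K) (Finsupp.single s 1) := by
  simpa using C_mul_X (m := m) (isUnit_one (M := K)) s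

theorem add_of_lt (hp : HasUnitLeadingTerm m p a) (hq : m.degree q ≺[m] a) :
    HasUnitLeadingTerm m (p + q) a := by
  rw [← hp.degree_eq] at hq
  exact ⟨(m.degree_add_of_lt hq).trans hp.degree_eq,
    m.leadingCoeff_add_of_lt hq ▸ hp.isUnit_leadingCoeff⟩

theorem mul [Nontrivial K] (hp : HasUnitLeadingTerm m p a) (hq : HasUnitLeadingTerm m q b) :
    HasUnitLeadingTerm m (p * q) (a + b) := by
  have hp_mem := hp.isUnit_leadingCoeff.mem_nonZeroDivisors
  refine ⟨?_, ?_⟩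
  · rw [m.degree_mul_of_left_mem_nonZeroDivisors hp_mem, hp.degree_eq, hq.degree_eq]
    exact m.leadingCoeff_ne_zero_iff.mp hq.isUnit_leadingCoeff.ne_zero
  · rw [m.leadingCoeff_mul_of_left_mem_nonZeroDivisors hp_mem]
    exact hp.isUnit_leadingCoeff.mul hq.isUnit_leadingCoeff

theorem prod {κ : Type*} {s : Finset κ} {f : κ → MvPolynomial σ K} {e : κ → σ →₀ ℕ}
    (hf : ∀ i ∈ s, HasUnitLeadingTerm m (f i) (e i)) :
    HasUnitLeadingTerm m (∏ i ∈ s, f i) (∑ i ∈ s, e i) := by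
  refine ⟨?_, ?_⟩
  · rw [m.degree_prod_of_mem_nonZeroDivisors
      fun i hi ↦ (hf i hi).isUnit_leadingCoeff.mem_nonZeroDivisors]
    exact Finset.sum_congr rfl fun i hi ↦ (hf i hi).degree_eq
  · rw [m.leadingCoeff_prod_of_mem_nonZeroDivisors
      fun i hi ↦ (hf i hi).isUnit_leadingCoeff.mem_nonZeroDivisors]
    exact IsUnit.prod_iff.mpr fun i hi ↦ (hf i hi).isUnit_leadingCoeff

theorem pow (hp : HasUnitLeadingTerm m p a) (n : ℕ) : HasUnitLeadingTerm m (p ^ n) (n • a) := by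
  simpa using prod (s := Finset.range n) fun _ _ ↦ hp

end HasUnitLeadingTerm

theorem degree_finsetSum_lt {κ : Type*} {s : Finset κ} {f : κ → MvPolynomial σ K} {a : σ →₀ ℕ}
    (ha : a ≠ 0) (hf : ∀ i ∈ s, m.degree (f i) ≺[m] a) : m.degree (∑ i ∈ s, f i) ≺[m] a := by
  have h_pos : ⊥ < m.toSyn a := by
    rwa [bot_lt_iff_ne_bot, m.bot_eq_zero, ne_eq, m.toSyn_eq_zero_iff]
  exact m.degree_sum_le.trans_lt ((Finset.sup_lt_iff h_pos).mpr hf)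

theorem linearIndependent_of_injective_degree {κ : Type*} {v : κ → MvPolynomial σ K}
    (h_inj : Function.Injective fun i ↦ m.degree (v i))
    (hv : ∀ i, m.leadingCoeff (v i) ∈ nonZeroDivisors K) : LinearIndependent K v := by
  classical
  rw [linearIndependent_iff']
  intro s c h_sum
  by_contra! h_ne
  obtain ⟨t, ht, h_max⟩ := Finset.exists_max_image {i ∈ s | c i ≠ 0}
    (fun i ↦ m.toSyn (m.degree (v i))) (Finset.filter_nonempty_iff.mpr h_ne)
  obtain ⟨hts, hct⟩ := Finset.mem_filter.mp ht
  have h_coeff : c t * m.leadingCoeff (v t) = 0 := by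
    have h := congrArg (coeff (m.degree (v t))) h_sum
    rw [coeff_sum, Finset.sum_eq_single t] at h
    · rwa [coeff_smul, smul_eq_mul, coeff_zero] at h
    · intro i hi hit
      obtain hci | hci := eq_or_ne (c i) 0
      · simp [hci]
      have h_lt : m.degree (v i) ≺[m] m.degree (v t) :=
        (h_max i (Finset.mem_filter.mpr ⟨hi, hci⟩)).lt_of_ne
          fun h ↦ hit (h_inj (m.toSyn.injective h))
      rw [coeff_smul, m.coeff_eq_zero_of_lt h_lt, smul_zero]
    · exact fun h ↦ absurd hts h
  exact hct ((mul_right_mem_nonZeroDivisors_eq_zero_iff (hv t)).mp h_coeff)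

theorem span_range_eq_top_of_hasUnitLeadingTerm {v : (σ →₀ ℕ) → MvPolynomial σ K}
    (hv : ∀ a, HasUnitLeadingTerm m (v a) a) : Submodule.span K (Set.range v) = ⊤ := by
  classical
  have h_monomial (a : σ →₀ ℕ) : ∀ c, monomial a c ∈ Submodule.span K (Set.range v) := by
    induction a using (InvImage.wf m.toSyn wellFounded_lt).induction with
    | _ a ih =>
      intro c
      obtain ⟨u, hu⟩ := (hv a).isUnit_leadingCoeff
      have hu : (v a).coeff a = u := by rw [hu, MonomialOrder.leadingCoeff, (hv a).degree_eq]
      have h_tail : v a - monomial a (u : K) ∈ Submodule.span K (Set.range v) := by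
        rw [← support_sum_monomial_coeff (v a - _)]
        refine Submodule.sum_mem _ fun b hb ↦ ih b ?_ _
        have hba : b ≠ a := by rintro rfl; simp [hu] at hb
        have hb_mem : b ∈ (v a).support := by simpa [coeff_monomial, hba.symm] using hb
        exact ((hv a).degree_eq ▸ m.le_degree hb_mem).lt_of_ne (m.toSyn.injective.ne hba)
      have h_head : v a ∈ Submodule.span K (Set.range v) := Submodule.subset_span ⟨a, rfl⟩
      have h_lead := Submodule.sub_mem _ h_head h_tail
      simpa [smul_monomial, mul_assoc] using Submodule.smul_mem _ (c * ↑u⁻¹) h_lead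
  refine eq_top_iff.mpr fun p _ ↦ ?_
  rw [← support_sum_monomial_coeff p]
  exact Submodule.sum_mem _ fun a _ ↦ h_monomial a _

/-- The lexicographic monomial order for which `X s` is smaller than `X t` when `g s < g t`. The
variables are indexed in reverse, as `MonomialOrder.lex` makes the one with the smallest index the
largest. -/
noncomputable def pullbackLexOrder {τ : Type*} [Finite σ] [LinearOrder τ] (g : σ → τ)
    (hg : Function.Injective g) : MonomialOrder σ :=
  letI : LinearOrder σ :=
    LinearOrder.lift' (fun s ↦ OrderDual.toDual (g s)) (OrderDual.toDual.injective.comp hg)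
  MonomialOrder.lex

theorem single_lt_single_pullbackLexOrder {τ : Type*} [Finite σ] [LinearOrder τ] {g : σ → τ}
    (hg : Function.Injective g) {s t : σ} (hst : g s < g t) :
    Finsupp.single s 1 ≺[pullbackLexOrder g hg] Finsupp.single t 1 := by
  let : LinearOrder σ :=
    LinearOrder.lift' (fun s ↦ OrderDual.toDual (g s)) (OrderDual.toDual.injective.comp hg)
  exact Finsupp.Lex.single_lt_iff.mpr (show t < s from hst)

end LeadingTerms

theorem homogeneousSubmodule_eq_span_image {σ K κ : Type*} [CommSemiring K]
    {v : κ → MvPolynomial σ K} {w : κ → ℕ} (h_span : Submodule.span K (Set.range v) = ⊤)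
    (h_hom : ∀ i, (v i).IsHomogeneous (w i)) (D : ℕ) :
    homogeneousSubmodule σ K D = Submodule.span K (v '' {i | w i = D}) := by
  apply le_antisymm
  · intro p hp
    have hp_mem : homogeneousComponent D p ∈
        (Submodule.span K (Set.range v)).map (homogeneousComponent D) :=
      Submodule.mem_map_of_mem (h_span ▸ Submodule.mem_top)
    rw [homogeneousComponent_of_mem hp, if_pos rfl, Submodule.map_span, ← Set.range_comp] at hp_mem
    refine Submodule.span_le.mpr ?_ hp_mem
    rintro _ ⟨i, rfl⟩
    rw [Function.comp_apply, homogeneousComponent_of_mem (h_hom i)]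
    split_ifs with h
    · exact Submodule.subset_span ⟨i, h.symm, rfl⟩
    · exact Submodule.zero_mem _
  · rw [Submodule.span_le]
    rintro _ ⟨i, rfl, rfl⟩
    exact h_hom i

/-- The exponents of total degree `D` with `i`-th entry below `d i`. -/
def boundedExponents {σ : Type*} [Fintype σ] [DecidableEq σ] (d : σ → ℕ) (D : ℕ) :
    Finset (σ → ℕ) :=
  {a ∈ Fintype.piFinset fun i ↦ Finset.range (d i) | ∑ i, a i = D}

theorem mem_boundedExponents {σ : Type*} [Fintype σ] [DecidableEq σ] {d a : σ → ℕ} {D : ℕ} :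
    a ∈ boundedExponents d D ↔ (∀ i, a i < d i) ∧ ∑ i, a i = D := by
  simp [boundedExponents]

theorem card_boundedExponents {σ : Type*} [Fintype σ] [DecidableEq σ] (d : σ → ℕ) (D : ℕ) :
    (boundedExponents d D).card =
      (∏ i, ∑ e ∈ Finset.range (d i), (Polynomial.X : Polynomial ℕ) ^ e).coeff D := by
  rw [Finset.prod_univ_sum, Polynomial.finsetSum_coeff, boundedExponents, Finset.card_filter]
  simp only [Finset.prod_pow_eq_pow_sum, Polynomial.coeff_X_pow, eq_comm]

section PurePowers

variable {σ K : Type*} [Fintype σ] [CommRing K] {m : MonomialOrder σ}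
  {f : σ → MvPolynomial σ K} {d : σ → ℕ}

/-- The product of powers of the `X i` and the `f i` in which the exponent `a i` is divided with
remainder by `d i`. If `f i` has leading monomial `X i ^ d i`, it has leading monomial `X ^ a`. -/
noncomputable def mixedMonomial (f : σ → MvPolynomial σ K) (d a : σ → ℕ) : MvPolynomial σ K :=
  ∏ i, X i ^ (a i % d i) * f i ^ (a i / d i)

theorem hasUnitLeadingTerm_mixedMonomial [Nontrivial K]
    (hf : ∀ i, HasUnitLeadingTerm m (f i) (Finsupp.single i (d i))) (a : σ →₀ ℕ) :
    HasUnitLeadingTerm m (mixedMonomial f d a) a := by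
  have h := HasUnitLeadingTerm.prod (s := Finset.univ) fun i _ ↦
    ((HasUnitLeadingTerm.X (m := m) (K := K) i).pow (a i % d i)).mul ((hf i).pow (a i / d i))
  have h_exp (i : σ) : (a i % d i) • Finsupp.single i 1 + (a i / d i) • Finsupp.single i (d i) =
      Finsupp.single i (a i) := by
    rw [Finsupp.smul_single, Finsupp.smul_single, ← Finsupp.single_add, smul_eq_mul, smul_eq_mul,
      mul_one, Nat.mod_add_div']
  rwa [Finset.sum_congr rfl fun i _ ↦ h_exp i, Finsupp.univ_sum_single] at h

theorem linearIndependent_mixedMonomial [Nontrivial K]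
    (hf : ∀ i, HasUnitLeadingTerm m (f i) (Finsupp.single i (d i))) :
    LinearIndependent K (mixedMonomial f d) := by
  have h_lead (a : σ → ℕ) := hasUnitLeadingTerm_mixedMonomial hf (Finsupp.equivFunOnFinite.symm a)
  refine linearIndependent_of_injective_degree (m := m) ?_
    fun a ↦ (h_lead a).isUnit_leadingCoeff.mem_nonZeroDivisors
  convert Finsupp.equivFunOnFinite.symm.injective using 2 with a
  exact (h_lead a).degree_eq

theorem span_range_mixedMonomial_eq_top [Nontrivial K]
    (hf : ∀ i, HasUnitLeadingTerm m (f i) (Finsupp.single i (d i))) :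
    Submodule.span K (Set.range (mixedMonomial f d)) = ⊤ := by
  rw [← Finsupp.equivFunOnFinite.surjective.range_comp]
  exact span_range_eq_top_of_hasUnitLeadingTerm (hasUnitLeadingTerm_mixedMonomial hf)

theorem isHomogeneous_mixedMonomial (hf : ∀ i, (f i).IsHomogeneous (d i)) (a : σ → ℕ) :
    (mixedMonomial f d a).IsHomogeneous (∑ i, a i) := by
  refine IsHomogeneous.prod _ _ _ fun i _ ↦ ?_
  have h := ((isHomogeneous_X K i).pow (a i % d i)).mul ((hf i).pow (a i / d i))
  rwa [one_mul, Nat.mod_add_div] at h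

theorem mul_mixedMonomial [DecidableEq σ] {i : σ} (hd : 0 < d i) (a : σ → ℕ) :
    f i * mixedMonomial f d a = mixedMonomial f d (a + Pi.single i (d i)) := by
  calc f i * mixedMonomial f d a
    _ = ∏ j, (if j = i then f j else 1) * (X j ^ (a j % d j) * f j ^ (a j / d j)) := by
      rw [Finset.prod_mul_distrib, Finset.prod_ite_eq' _ _ f, if_pos (Finset.mem_univ i),
        mixedMonomial]
    _ = mixedMonomial f d (a + Pi.single i (d i)) := by
      refine Finset.prod_congr rfl fun j _ ↦ ?_
      obtain rfl | hji := eq_or_ne j i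
      · simp only [if_true, Pi.add_apply, Pi.single_eq_same, Nat.add_mod_right,
          Nat.add_div_right _ hd]
        ring
      · simp [hji]

theorem mixedMonomial_mem_span_range {i : σ} {a : σ → ℕ} (hd : 0 < d i) (ha : d i ≤ a i) :
    mixedMonomial f d a ∈ Ideal.span (Set.range f) := by
  have h_dvd : f i ∣ mixedMonomial f d a :=
    ((dvd_pow_self _ (Nat.div_pos ha hd).ne').mul_left _).trans
      (Finset.dvd_prod_of_mem _ (Finset.mem_univ i))
  exact Ideal.mem_of_dvd _ h_dvd (Ideal.subset_span ⟨i, rfl⟩)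

theorem mul_mem_span_mixedMonomial [Nontrivial K] {i : σ} (hd : 0 < d i)
    (hf : ∀ i, HasUnitLeadingTerm m (f i) (Finsupp.single i (d i))) (p : MvPolynomial σ K) :
    f i * p ∈ Submodule.span K (mixedMonomial f d '' {a | ∃ i, d i ≤ a i}) := by
  classical
  have hp : p ∈ Submodule.span K (Set.range (mixedMonomial f d)) :=
    span_range_mixedMonomial_eq_top hf ▸ Submodule.mem_top
  induction hp using Submodule.span_induction with
  | mem _ h =>
    obtain ⟨a, rfl⟩ := h
    rw [mul_mixedMonomial hd]
    exact Submodule.subset_span ⟨_, ⟨i, by simp⟩, rfl⟩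
  | zero => simp
  | add p q _ _ hp hq => exact mul_add (f i) p q ▸ Submodule.add_mem _ hp hq
  | smul c p _ hp => exact mul_smul_comm c (f i) p ▸ Submodule.smul_mem _ c hp

theorem mem_span_mixedMonomial_of_mem_span_range [Nontrivial K] (hd : ∀ i, 0 < d i)
    (hf : ∀ i, HasUnitLeadingTerm m (f i) (Finsupp.single i (d i))) {p : MvPolynomial σ K}
    (hp : p ∈ Ideal.span (Set.range f)) :
    p ∈ Submodule.span K (mixedMonomial f d '' {a | ∃ i, d i ≤ a i}) := by
  obtain ⟨c, rfl⟩ := Ideal.mem_span_range_iff_exists_fun.mp hp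
  refine Submodule.sum_mem _ fun i _ ↦ ?_
  rw [mul_comm]
  exact mul_mem_span_mixedMonomial (hd i) hf (c i)

theorem linearIndependent_mk_mixedMonomial [Nontrivial K] (hd : ∀ i, 0 < d i)
    (hf : ∀ i, HasUnitLeadingTerm m (f i) (Finsupp.single i (d i))) :
    LinearIndependent K fun a : {a : σ → ℕ // ∀ i, a i < d i} ↦
      Ideal.Quotient.mkₐ K (Ideal.span (Set.range f)) (mixedMonomial f d a) := by
  have h_indep := linearIndependent_mixedMonomial hf
  refine (h_indep.comp _ Subtype.val_injective).map
    (f := (Ideal.Quotient.mkₐ K (Ideal.span (Set.range f))).toLinearMap) ?_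
  have h_disj : Disjoint {a : σ → ℕ | ∀ i, a i < d i} {a | ∃ i, d i ≤ a i} :=
    Set.disjoint_left.mpr fun a ha ⟨i, hi⟩ ↦ (ha i).not_ge hi
  rw [Set.range_comp, Subtype.range_coe_subtype]
  refine (h_indep.disjoint_span_image h_disj).mono_right fun p hp ↦ ?_
  exact mem_span_mixedMonomial_of_mem_span_range hd hf (Ideal.Quotient.eq_zero_iff_mem.mp hp)

theorem map_mk_homogeneousSubmodule_eq_span [DecidableEq σ] [Nontrivial K] (hd : ∀ i, 0 < d i)
    (hf : ∀ i, HasUnitLeadingTerm m (f i) (Finsupp.single i (d i)))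
    (h_hom : ∀ i, (f i).IsHomogeneous (d i)) (D : ℕ) :
    (homogeneousSubmodule σ K D).map
        (Ideal.Quotient.mkₐ K (Ideal.span (Set.range f))).toLinearMap =
      Submodule.span K (Set.range fun a : boundedExponents d D ↦
        Ideal.Quotient.mkₐ K (Ideal.span (Set.range f)) (mixedMonomial f d a)) := by
  rw [homogeneousSubmodule_eq_span_image (span_range_mixedMonomial_eq_top hf)
    (isHomogeneous_mixedMonomial h_hom), Submodule.map_span]
  apply le_antisymm <;> rw [Submodule.span_le]
  · rintro _ ⟨_, ⟨a, ha, rfl⟩, rfl⟩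
    by_cases h_lt : ∀ i, a i < d i
    · exact Submodule.subset_span ⟨⟨a, mem_boundedExponents.mpr ⟨h_lt, ha⟩⟩, rfl⟩
    · obtain ⟨i, hi⟩ := not_forall.mp h_lt
      have h_zero := Ideal.Quotient.eq_zero_iff_mem.mpr
        (mixedMonomial_mem_span_range (f := f) (hd i) (not_lt.mp hi))
      exact (Submodule.mem_bot K).mpr h_zero ▸ Submodule.zero_mem _
  · rintro _ ⟨⟨a, ha⟩, rfl⟩
    exact Submodule.subset_span ⟨_, ⟨a, (mem_boundedExponents.mp ha).2, rfl⟩, rfl⟩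

theorem finrank_map_mk_homogeneousSubmodule [Nontrivial K] (hd : ∀ i, 0 < d i)
    (hf : ∀ i, HasUnitLeadingTerm m (f i) (Finsupp.single i (d i)))
    (h_hom : ∀ i, (f i).IsHomogeneous (d i)) (D : ℕ) :
    Module.finrank K ((homogeneousSubmodule σ K D).map
        (Ideal.Quotient.mkₐ K (Ideal.span (Set.range f))).toLinearMap) =
      (∏ i, ∑ e ∈ Finset.range (d i), (Polynomial.X : Polynomial ℕ) ^ e).coeff D := by
  classical
  have h_indep := (linearIndependent_mk_mixedMonomial hd hf).comp
    (fun a : boundedExponents d D ↦ ⟨a, (mem_boundedExponents.mp a.2).1⟩)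
    fun _ _ h ↦ Subtype.ext (congrArg (fun b ↦ b.1) h)
  rw [map_mk_homogeneousSubmodule_eq_span hd hf h_hom, ← card_boundedExponents]
  exact (finrank_span_eq_card h_indep).trans (Fintype.card_coe _)

end PurePowers

theorem mul_prod_mem_iff_of_add_mem {R κ : Type*} [CommRing R] {J : Ideal R} {s : Finset κ}
    {x y : κ → R} (h : ∀ i ∈ s, x i + y i ∈ J) (z : R) :
    z * ∏ i ∈ s, x i ∈ J ↔ z * ∏ i ∈ s, y i ∈ J := by
  have hx : ∀ i ∈ s, Ideal.Quotient.mk J (x i) = -Ideal.Quotient.mk J (y i) := fun i hi ↦ by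
    rw [eq_neg_iff_add_eq_zero, ← map_add, Ideal.Quotient.eq_zero_iff_mem.mpr (h i hi)]
  simp only [← Ideal.Quotient.eq_zero_iff_mem, map_mul, map_prod]
  rw [Finset.prod_congr rfl hx, Finset.prod_neg, mul_left_comm]
  exact ((isUnit_one.neg).pow _).mul_right_eq_zero

section TriangularForms

variable {K ι : Type*} {n : ι → ℕ}

/-- The degrees of the polynomials `triangularGenerator a`, which are also the exponents in their
leading pure powers: `n i + 1` at `x_{i,0}`, and `1` at the other variables. -/
def generatorDegree (n : ι → ℕ) : (Σ i, Fin (n i + 1)) → ℕ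
  | ⟨i, m⟩ => Fin.cases (n i + 1) (fun _ ↦ 1) m

theorem generatorDegree_pos (q : Σ i, Fin (n i + 1)) : 0 < generatorDegree n q := by
  obtain ⟨i, m⟩ := q
  cases m using Fin.cases with
  | zero => exact Nat.succ_pos _
  | succ m => exact one_pos

theorem prod_generatorDegree [Fintype ι] {M : Type*} [CommMonoid M] {g : ℕ → M} (hg : g 1 = 1) :
    ∏ q, g (generatorDegree n q) = ∏ i, g (n i + 1) := by
  simp [Fintype.prod_sigma, Fin.prod_univ_succ, generatorDegree, hg]

/-- The monomial order in which all leading monomials of `triangularGenerator a` are pure powers: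
`x_{j,0}` is smaller than `x_{i,m}` when `j < i`, and also when `j = i` and `m ≥ 1`. -/
noncomputable def triangularOrder [Finite ι] [LinearOrder ι] (n : ι → ℕ) :
    MonomialOrder (Σ i, Fin (n i + 1)) :=
  pullbackLexOrder toLex toLex.injective

theorem degree_C_mul_X_triangularOrder_lt {R : Type*} [CommSemiring R] [Finite ι] [LinearOrder ι]
    {s t : Σ i, Fin (n i + 1)} (hst : toLex s < toLex t) (c : R) :
    (triangularOrder n).degree (C c * X s) ≺[triangularOrder n] Finsupp.single t 1 := by
  rw [C_mul_X_eq_monomial]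
  exact ((triangularOrder n).degree_monomial_le c).trans_lt
    (single_lt_single_pullbackLexOrder toLex.injective hst)

variable [CommRing K] [Fintype ι] [LinearOrder ι]

/-- The linear form `Σ_{j ≤ i} a_{j,m}^i x_{j,0}`, in the `0`-indexed convention for `m` of
`bottIdeal`. -/
noncomputable def triangularForm (a : ι → (i : ι) → Fin (n i) → K) (i : ι) (m : Fin (n i)) :
    MvPolynomial (Σ i, Fin (n i + 1)) K :=
  ∑ j with j ≤ i, C (a j i m) * X ⟨j, 0⟩

/-- The analogue of `bottIdeal` over a commutative ring and with blocks indexed by a finite linear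
order. -/
noncomputable def triangularIdeal (a : ι → (i : ι) → Fin (n i) → K) :
    Ideal (MvPolynomial (Σ i, Fin (n i + 1)) K) :=
  Ideal.span ({p | ∃ i, p = ∏ m : Fin (n i + 1), X ⟨i, m⟩} ∪
    {p | ∃ i, ∃ m : Fin (n i), p = X ⟨i, m.succ⟩ + triangularForm a i m})

/-- Generators of `triangularIdeal a`, one for each variable, whose leading monomials are pure
powers of the variables: in the monomial generators, `x_{i,m}` with `m ≥ 1` is replaced by the
linear form that it is congruent to up to sign. -/
noncomputable def triangularGenerator (a : ι → (i : ι) → Fin (n i) → K) :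
    (Σ i, Fin (n i + 1)) → MvPolynomial (Σ i, Fin (n i + 1)) K
  | ⟨i, m⟩ => Fin.cases (X ⟨i, 0⟩ * ∏ m, triangularForm a i m)
      (fun m ↦ X ⟨i, m.succ⟩ + triangularForm a i m) m

variable {a : ι → (i : ι) → Fin (n i) → K}

theorem span_range_triangularGenerator :
    Ideal.span (Set.range (triangularGenerator a)) = triangularIdeal a := by
  have h_prod_mem {J : Ideal (MvPolynomial (Σ i, Fin (n i + 1)) K)} {i : ι}
      (hJ : ∀ m : Fin (n i), X ⟨i, m.succ⟩ + triangularForm a i m ∈ J) :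
      ∏ m : Fin (n i + 1), X ⟨i, m⟩ ∈ J ↔ X ⟨i, 0⟩ * ∏ m, triangularForm a i m ∈ J := by
    rw [Fin.prod_univ_succ]
    exact mul_prod_mem_iff_of_add_mem (fun m _ ↦ hJ m) _
  have h_linear (i : ι) (m : Fin (n i)) :
      X ⟨i, m.succ⟩ + triangularForm a i m ∈ triangularIdeal a :=
    Ideal.subset_span (Or.inr ⟨i, m, rfl⟩)
  have h_generator (q) : triangularGenerator a q ∈ Ideal.span (Set.range (triangularGenerator a)) :=
    Ideal.subset_span ⟨q, rfl⟩
  apply le_antisymm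
  · rw [Ideal.span_le]
    rintro _ ⟨⟨i, m⟩, rfl⟩
    cases m using Fin.cases with
    | zero => exact (h_prod_mem (h_linear i)).mp (Ideal.subset_span (Or.inl ⟨i, rfl⟩))
    | succ m => exact h_linear i m
  · rw [triangularIdeal, Ideal.span_le]
    rintro _ (⟨i, rfl⟩ | ⟨i, m, rfl⟩)
    · exact (h_prod_mem fun m ↦ h_generator ⟨i, m.succ⟩).mpr (h_generator ⟨i, 0⟩)
    · exact h_generator ⟨i, m.succ⟩

theorem isHomogeneous_triangularForm (i : ι) (m : Fin (n i)) :
    (triangularForm a i m).IsHomogeneous 1 :=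
  IsHomogeneous.sum _ _ _ fun j _ ↦ isHomogeneous_C_mul_X (a j i m) _

theorem isHomogeneous_triangularGenerator (q : Σ i, Fin (n i + 1)) :
    (triangularGenerator a q).IsHomogeneous (generatorDegree n q) := by
  obtain ⟨i, m⟩ := q
  cases m using Fin.cases with
  | zero =>
    have h_prod := IsHomogeneous.prod Finset.univ _ _
      fun m _ ↦ isHomogeneous_triangularForm (a := a) i m
    simpa [triangularGenerator, generatorDegree, add_comm] using
      (isHomogeneous_X K _).mul h_prod
  | succ m => exact (isHomogeneous_X K _).add (isHomogeneous_triangularForm i m)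

theorem degree_triangularForm_lt (i : ι) (m : Fin (n i)) :
    (triangularOrder n).degree (triangularForm a i m) ≺[triangularOrder n]
      Finsupp.single ⟨i, m.succ⟩ 1 := by
  refine degree_finsetSum_lt (by simp) fun j hj ↦ ?_
  obtain h_lt | rfl := (Finset.mem_filter.mp hj).2.lt_or_eq
  · exact degree_C_mul_X_triangularOrder_lt (Sigma.Lex.left _ _ h_lt) _
  · exact degree_C_mul_X_triangularOrder_lt (Sigma.Lex.right _ _ m.succ_pos) _

theorem hasUnitLeadingTerm_triangularForm [Nontrivial K] {i : ι} {m : Fin (n i)}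
    (ha : IsUnit (a i i m)) :
    HasUnitLeadingTerm (triangularOrder n) (triangularForm a i m) (Finsupp.single ⟨i, 0⟩ 1) := by
  rw [triangularForm, ← Finset.add_sum_erase _ _ (a := i) (by simp)]
  refine (HasUnitLeadingTerm.C_mul_X ha _).add_of_lt (degree_finsetSum_lt (by simp) fun j hj ↦ ?_)
  obtain ⟨h_ne, hj⟩ := Finset.mem_erase.mp hj
  have h_lt : j < i := (Finset.mem_filter.mp hj).2.lt_of_ne h_ne
  exact degree_C_mul_X_triangularOrder_lt (Sigma.Lex.left _ _ h_lt) _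

theorem hasUnitLeadingTerm_triangularGenerator [Nontrivial K]
    (ha : ∀ i m, IsUnit (a i i m)) (q : Σ i, Fin (n i + 1)) :
    HasUnitLeadingTerm (triangularOrder n) (triangularGenerator a q)
      (Finsupp.single q (generatorDegree n q)) := by
  obtain ⟨i, m⟩ := q
  cases m using Fin.cases with
  | zero =>
    have h_prod := HasUnitLeadingTerm.prod (s := Finset.univ)
      fun m _ ↦ hasUnitLeadingTerm_triangularForm (ha i m)
    simpa [triangularGenerator, generatorDegree, Finsupp.single_add, add_comm] using
      (HasUnitLeadingTerm.X (⟨i, 0⟩ : Σ i, Fin (n i + 1))).mul h_prod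
  | succ m => exact (HasUnitLeadingTerm.X _).add_of_lt (degree_triangularForm_lt i m)

end TriangularForms

theorem stmt_18_general {K ι : Type*} [CommRing K] [Nontrivial K] [Fintype ι] [LinearOrder ι]
    {n : ι → ℕ} {a : ι → (i : ι) → Fin (n i) → K} (ha : ∀ i m, IsUnit (a i i m)) (D : ℕ) :
    Module.finrank K ((homogeneousSubmodule (Σ i, Fin (n i + 1)) K D).map
        (Ideal.Quotient.mkₐ K (triangularIdeal a)).toLinearMap) =
      (∏ i, ∑ e ∈ Finset.range (n i + 1), (Polynomial.X : Polynomial ℕ) ^ e).coeff D := by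
  rw [← span_range_triangularGenerator, finrank_map_mk_homogeneousSubmodule generatorDegree_pos
    (hasUnitLeadingTerm_triangularGenerator ha) isHomogeneous_triangularGenerator]
  exact congrArg (Polynomial.coeff · D) (prod_generatorDegree
    (g := fun d ↦ ∑ e ∈ Finset.range d, (Polynomial.X : Polynomial ℕ) ^ e) (by simp))

/-- Suppose `A` is in unipotent upper triangular form.  Then for every `d ≥ 0`,
the `𝔽₂`-dimension of the image in `R/I` of the subspace of homogeneous polynomials of degree `d`
in `R` equals the coefficient of `t^d` in `∏_{i=1}^{k} (1 + t + t² + ⋯ + t^{n_i})`. -/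
theorem stmt_18 (k : ℕ) (hk : 1 ≤ k) (n : Fin k → ℕ) (hn : ∀ i, 1 ≤ n i)
    (a : Fin k → (i : Fin k) → Fin (n i) → ZMod 2)
    (hUT : ∀ j i : Fin k, i < j → ∀ m : Fin (n i), a j i m = 0)
    (hdiag : ∀ i : Fin k, ∀ m : Fin (n i), a i i m = 1) :
    ∀ d : ℕ,
      Module.finrank (ZMod 2)
        ↥(Submodule.map (Ideal.Quotient.mkₐ (ZMod 2) (bottIdeal k n a)).toLinearMap
            (MvPolynomial.homogeneousSubmodule (Σ i : Fin k, Fin (n i + 1)) (ZMod 2) d))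
      = (∏ i : Fin k, ∑ e ∈ Finset.range (n i + 1), (Polynomial.X : Polynomial ℕ) ^ e).coeff d := by
  exact stmt_18_general fun i m ↦ hdiag i m ▸ isUnit_one
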